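/- The objective ℓ satisfies restricted strong convexity and restricted smoothness: (i) for all u, v : V → ℝ, ℓ(v) ≥ ℓ(u) + ⟨∇ℓ(u), v − u⟩ + λ‖v − u‖₂²; and (ii) for all u, v : V → ℝ whose combined support supp(u) ∪ supp(v) has cardinality at most M, ℓ(v) ≤ ℓ(u) + ⟨∇ℓ(u), v − u⟩ + (λ + M·G²)‖v − u‖₂². Here the gradient is given coordinatewise by (∇ℓ(u))_j = 2⟨∑_{i∈V} u_i g_i − b, g_j⟩ + 2λ u_j. -/

import Mathlib

open scoped BigOperators RealInnerProductSpace

/-- The regularized gradient-matching objective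
`ℓ(w) = ‖∑ᵢ wᵢ gᵢ − b‖₂² + λ ∑ᵢ wᵢ²`. -/
noncomputable def ell {V : Type*} [Fintype V] {d : ℕ}
    (g : V → EuclideanSpace ℝ (Fin d)) (b : EuclideanSpace ℝ (Fin d))
    (lam : ℝ) (w : V → ℝ) : ℝ :=
  ‖(∑ i, w i • g i) - b‖ ^ 2 + lam * ∑ i, (w i) ^ 2

/-- The gradient of `ℓ`: `(∇ℓ(u))ⱼ = 2⟨∑ᵢ uᵢ gᵢ − b, gⱼ⟩ + 2λ uⱼ`. -/
noncomputable def gradEll {V : Type*} [Fintype V] {d : ℕ}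
    (g : V → EuclideanSpace ℝ (Fin d)) (b : EuclideanSpace ℝ (Fin d))
    (lam : ℝ) (u : V → ℝ) (j : V) : ℝ :=
  2 * ⟪(∑ i, u i • g i) - b, g j⟫ + 2 * lam * u j

/-!
The objective is quadratic, so its first-order Taylor expansion at `u` has the exact remainder
`λ ∑ⱼ (vⱼ - uⱼ)² + ‖∑ⱼ (vⱼ - uⱼ) gⱼ‖²`. The last term is nonnegative, which is strong convexity.
By Cauchy–Schwarz, it is at most `∑ⱼ (vⱼ - uⱼ)²` times the sum of `‖gⱼ‖²` over the support of
`v - u`, which has at most `M` elements; this is restricted smoothness.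
-/

section NormSumSmul

variable {ι 𝕜 E : Type*} [NormedField 𝕜] [SeminormedAddCommGroup E] [NormedSpace 𝕜 E]

theorem norm_sum_smul_sq_le_sum_norm_sq_mul_sum_norm_sq (s : Finset ι) (w : ι → 𝕜) (g : ι → E) :
    ‖∑ i ∈ s, w i • g i‖ ^ 2 ≤ (∑ i ∈ s, ‖w i‖ ^ 2) * ∑ i ∈ s, ‖g i‖ ^ 2 :=
  calc ‖∑ i ∈ s, w i • g i‖ ^ 2
    _ ≤ (∑ i ∈ s, ‖w i‖ * ‖g i‖) ^ 2 := by
      gcongr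
      exact norm_sum_le_of_le s fun i _ ↦ norm_smul_le (w i) (g i)
    _ ≤ (∑ i ∈ s, ‖w i‖ ^ 2) * ∑ i ∈ s, ‖g i‖ ^ 2 := Finset.sum_mul_sq_le_sq_mul_sq s _ _

theorem norm_sum_smul_sq_le_card_mul {s : Finset ι} {g : ι → E} {G : ℝ}
    (hG : ∀ i ∈ s, ‖g i‖ ≤ G) (w : ι → 𝕜) :
    ‖∑ i ∈ s, w i • g i‖ ^ 2 ≤ s.card * G ^ 2 * ∑ i ∈ s, ‖w i‖ ^ 2 := by
  have sum_norm_sq_le : ∑ i ∈ s, ‖g i‖ ^ 2 ≤ s.card * G ^ 2 := by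
    rw [← nsmul_eq_mul]
    exact Finset.sum_le_card_nsmul s _ _ fun i hi ↦ by gcongr; exact hG i hi
  calc ‖∑ i ∈ s, w i • g i‖ ^ 2
    _ ≤ (∑ i ∈ s, ‖w i‖ ^ 2) * ∑ i ∈ s, ‖g i‖ ^ 2 :=
      norm_sum_smul_sq_le_sum_norm_sq_mul_sum_norm_sq s w g
    _ ≤ (∑ i ∈ s, ‖w i‖ ^ 2) * (s.card * G ^ 2) := by gcongr
    _ = s.card * G ^ 2 * ∑ i ∈ s, ‖w i‖ ^ 2 := mul_comm _ _

theorem norm_sum_smul_sq_le_ncard_support_mul [Fintype ι] {g : ι → E} {w : ι → 𝕜} {G : ℝ}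
    (hG : ∀ i ∈ Function.support w, ‖g i‖ ≤ G) :
    ‖∑ i, w i • g i‖ ^ 2 ≤ (Function.support w).ncard * G ^ 2 * ∑ i, ‖w i‖ ^ 2 := by
  classical
  let s : Finset ι := (Function.support w).toFinset
  have sum_eq : ∑ i ∈ s, w i • g i = ∑ i, w i • g i :=
    Finset.sum_subset s.subset_univ fun i _ hi ↦ by simp_all [s]
  calc ‖∑ i, w i • g i‖ ^ 2
    _ = ‖∑ i ∈ s, w i • g i‖ ^ 2 := by rw [sum_eq]
    _ ≤ s.card * G ^ 2 * ∑ i ∈ s, ‖w i‖ ^ 2 :=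
      norm_sum_smul_sq_le_card_mul (fun i hi ↦ hG i (Set.mem_toFinset.mp hi)) w
    _ ≤ s.card * G ^ 2 * ∑ i, ‖w i‖ ^ 2 := by
      gcongr
      exact s.subset_univ
    _ = (Function.support w).ncard * G ^ 2 * ∑ i, ‖w i‖ ^ 2 := by
      rw [Set.ncard_eq_toFinset_card']

end NormSumSmul

section GradientMatching

variable {V E : Type*} [Fintype V] [SeminormedAddCommGroup E] [InnerProductSpace ℝ E]

/-- The regularized gradient-matching objective `ell`, for gradients in an arbitrary real inner
product space. -/
noncomputable def gradientMatchingLoss (g : V → E) (b : E) (lam : ℝ) (w : V → ℝ) : ℝ :=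
  ‖(∑ i, w i • g i) - b‖ ^ 2 + lam * ∑ i, (w i) ^ 2

/-- The coordinates of the gradient of `gradientMatchingLoss`, extending `gradEll` to an arbitrary
real inner product space. -/
noncomputable def gradientMatchingLossGrad (g : V → E) (b : E) (lam : ℝ) (u : V → ℝ) (j : V) : ℝ :=
  2 * ⟪(∑ i, u i • g i) - b, g j⟫ + 2 * lam * u j

theorem sum_gradientMatchingLossGrad_mul (g : V → E) (b : E) (lam : ℝ) (u w : V → ℝ) :
    ∑ j, gradientMatchingLossGrad g b lam u j * w j =
      2 * ⟪(∑ i, u i • g i) - b, ∑ j, w j • g j⟫ + 2 * lam * ∑ j, u j * w j := by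
  rw [inner_sum, Finset.mul_sum, Finset.mul_sum, ← Finset.sum_add_distrib]
  refine Finset.sum_congr rfl fun j _ ↦ ?_
  rw [gradientMatchingLossGrad, real_inner_smul_right]
  ring

theorem gradientMatchingLoss_add (g : V → E) (b : E) (lam : ℝ) (u w : V → ℝ) :
    gradientMatchingLoss g b lam (u + w) =
      gradientMatchingLoss g b lam u + (∑ j, gradientMatchingLossGrad g b lam u j * w j)
        + lam * ∑ j, (w j) ^ 2 + ‖∑ j, w j • g j‖ ^ 2 := by
  have residual_add : (∑ i, (u + w) i • g i) - b = ((∑ i, u i • g i) - b) + ∑ j, w j • g j := by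
    simp only [Pi.add_apply, add_smul, Finset.sum_add_distrib]
    abel
  have sum_add_sq :
      ∑ i, ((u + w) i) ^ 2 = ∑ i, (u i) ^ 2 + 2 * ∑ j, u j * w j + ∑ j, (w j) ^ 2 := by
    simp only [Pi.add_apply, add_sq, Finset.sum_add_distrib, Finset.mul_sum, mul_assoc]
  rw [sum_gradientMatchingLossGrad_mul, gradientMatchingLoss, gradientMatchingLoss, residual_add,
    norm_add_sq_real, sum_add_sq]
  ring

theorem gradientMatchingLoss_eq_taylor (g : V → E) (b : E) (lam : ℝ) (u v : V → ℝ) :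
    gradientMatchingLoss g b lam v =
      gradientMatchingLoss g b lam u
        + (∑ j, gradientMatchingLossGrad g b lam u j * (v j - u j))
        + lam * ∑ j, (v j - u j) ^ 2 + ‖∑ j, (v j - u j) • g j‖ ^ 2 := by
  simpa using gradientMatchingLoss_add g b lam u (v - u)

theorem norm_sum_sub_smul_sq_le_of_ncard_le {g : V → E} {G : ℝ} (hG : ∀ i, ‖g i‖ ≤ G)
    {u v : V → ℝ} {M : ℕ} (hM : (Function.support u ∪ Function.support v).ncard ≤ M) :
    ‖∑ j, (v j - u j) • g j‖ ^ 2 ≤ M * G ^ 2 * ∑ j, (v j - u j) ^ 2 := by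
  have ncard_support_sub_le : (Function.support fun j ↦ v j - u j).ncard ≤ M :=
    (Set.ncard_le_ncard ((Function.support_sub v u).trans (Set.union_comm _ _).subset)).trans hM
  calc ‖∑ j, (v j - u j) • g j‖ ^ 2
    _ ≤ (Function.support fun j ↦ v j - u j).ncard * G ^ 2 * ∑ j, ‖v j - u j‖ ^ 2 :=
      norm_sum_smul_sq_le_ncard_support_mul fun i _ ↦ hG i
    _ ≤ M * G ^ 2 * ∑ j, ‖v j - u j‖ ^ 2 := by gcongr
    _ = M * G ^ 2 * ∑ j, (v j - u j) ^ 2 := by simp only [Real.norm_eq_abs, sq_abs]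

theorem ell_restricted_strong_convexity_smoothness_general (g : V → E) (G : ℝ)
    (hG : ∀ i, ‖g i‖ ≤ G) (b : E) (lam : ℝ) (M : ℕ) :
    (∀ u v : V → ℝ,
      gradientMatchingLoss g b lam v ≥ gradientMatchingLoss g b lam u
        + (∑ j, gradientMatchingLossGrad g b lam u j * (v j - u j))
        + lam * ∑ j, (v j - u j) ^ 2) ∧
    (∀ u v : V → ℝ,
      (Function.support u ∪ Function.support v).ncard ≤ M →
      gradientMatchingLoss g b lam v ≤ gradientMatchingLoss g b lam u
        + (∑ j, gradientMatchingLossGrad g b lam u j * (v j - u j))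
        + (lam + M * G ^ 2) * ∑ j, (v j - u j) ^ 2) := by
  refine ⟨fun u v ↦ ?_, fun u v hM ↦ ?_⟩
  · rw [gradientMatchingLoss_eq_taylor g b lam u v]
    exact le_add_of_nonneg_right (sq_nonneg _)
  · rw [gradientMatchingLoss_eq_taylor g b lam u v, add_mul, ← add_assoc]
    gcongr
    exact norm_sum_sub_smul_sq_le_of_ncard_le hG hM

end GradientMatching

/-- Restricted strong convexity and restricted smoothness of the
regularized gradient-matching objective. -/
theorem ell_restricted_strong_convexity_smoothness
    {V : Type*} [Fintype V] [DecidableEq V] {d : ℕ} (hd : 1 ≤ d)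
    (g : V → EuclideanSpace ℝ (Fin d)) (G : ℝ) (hG : ∀ i, ‖g i‖ ≤ G)
    (b : EuclideanSpace ℝ (Fin d)) (lam : ℝ) (hlam : 0 < lam)
    (M : ℕ) (hM : 0 < M) :
    (∀ u v : V → ℝ,
      ell g b lam v ≥ ell g b lam u + (∑ j, gradEll g b lam u j * (v j - u j))
        + lam * ∑ j, (v j - u j) ^ 2) ∧
    (∀ u v : V → ℝ,
      (Function.support u ∪ Function.support v).ncard ≤ M →
      ell g b lam v ≤ ell g b lam u + (∑ j, gradEll g b lam u j * (v j - u j))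
        + (lam + M * G ^ 2) * ∑ j, (v j - u j) ^ 2) :=
  ell_restricted_strong_convexity_smoothness_general g G hG b lam M
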